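/- arXiv:2406.16287 — 4 statements merged into one kernel-verified Lean document; each statement's English description precedes it below -/
import Mathlib

section
/- For every integer k ≥ 0, the quantity c_k := (∫₁³ L_k(x)² dx) / (∫₋₁¹ L_k(x)² dx) satisfies 1 ≤ c_k < 2^{2k−1}·3^{2k+1}; equivalently, ∫₋₁¹ L_k(x)² dx ≤ ∫₁³ L_k(x)² dx < 2^{2k−1}·3^{2k+1}·(2/(2k+1)). -/
open MeasureTheory intervalIntegral

/-- The degree-`k` Legendre polynomial, via Rodrigues' formula. -/
noncomputable def legendre (k : ℕ) (x : ℝ) : ℝ :=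
  (1 / ((2 : ℝ) ^ k * (Nat.factorial k : ℝ))) *
    iteratedDeriv k (fun y : ℝ => (y ^ 2 - 1) ^ k) x

/-!
On `[-1, 1]`, Rodrigues' formula and integration by parts make `L_k` orthogonal to every polynomial
of degree `< k`. Since `x L_k' - k L_k` has degree `< k`, integrating
`(x L_k²)' = (2k + 1) L_k² + 2 L_k (x L_k' - k L_k)` gives `∫₋₁¹ L_k² = 2 / (2k + 1)`.

To the right of `1`, Leibniz' rule expands Rodrigues' formula as
`L_k(x) = ∑ᵢ (k choose i)² ((x - 1) / 2)ⁱ ((x + 1) / 2)ᵏ⁻ⁱ`, a sum of nonnegative terms. The term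
`i = 0` gives `1 ≤ L_k(x)`, and bounding one of the two binomial coefficients by `2ᵏ` leaves the
binomial expansion of `xᵏ`, so that `L_k(x) ≤ (2x)ᵏ`.
-/

section LegendrePoly

open Polynomial

theorem iteratedDeriv_polynomial_eval {𝕜 : Type*} [NontriviallyNormedField 𝕜] (p : 𝕜[X]) (n : ℕ) :
    iteratedDeriv n (fun x => p.eval x) = fun x => (derivative^[n] p).eval x := by
  induction n with
  | zero => rfl
  | succ n ih =>
    funext x
    rw [iteratedDeriv_succ, ih, Polynomial.deriv, Function.iterate_succ_apply']

theorem degree_X_mul_derivative_sub_natCast_mul_lt {R : Type*} [CommRing R] {p : R[X]} {n : ℕ}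
    (hp : p.natDegree ≤ n) : (X * derivative p - (n : R[X]) * p).degree < (n : WithBot ℕ) := by
  rw [degree_lt_iff_coeff_zero]
  intro m hm
  have hcoeff : (X * derivative p).coeff m = m * p.coeff m := by
    cases m with
    | zero => simp
    | succ m => rw [coeff_X_mul, coeff_derivative, mul_comm, Nat.cast_succ]
  rw [coeff_sub, hcoeff, coeff_natCast_mul]
  rcases hm.eq_or_lt with rfl | hlt
  · exact sub_self _
  · simp only [coeff_eq_zero_of_natDegree_lt (hp.trans_lt hlt), mul_zero, sub_self]

theorem iterate_derivative_X_sub_C_mul_X_sub_C_pow {R : Type*} [CommRing R] (a b : R) (k : ℕ) :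
    derivative^[k] (((X - C a) * (X - C b)) ^ k) =
      (k.factorial : R[X]) * ∑ i ∈ Finset.range (k + 1),
        (k.choose i : R[X]) ^ 2 * ((X - C a) ^ i * (X - C b) ^ (k - i)) := by
  rw [mul_pow, iterate_derivative_mul, Finset.mul_sum]
  refine Finset.sum_congr rfl fun i hi => ?_
  have hik : i ≤ k := Finset.mem_range_succ_iff.mp hi
  have hfactorial : (k.choose i : R[X]) * i.factorial * (k - i).factorial = k.factorial :=
    mod_cast congrArg (Nat.cast (R := R[X])) (Nat.choose_mul_factorial_mul_factorial hik)
  rw [iterate_derivative_X_sub_pow, iterate_derivative_X_sub_pow, Nat.sub_sub_self hik,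
    Nat.descFactorial_eq_factorial_mul_choose, Nat.descFactorial_eq_factorial_mul_choose,
    Nat.choose_symm hik, ← hfactorial]
  simp only [nsmul_eq_mul, Nat.cast_mul]
  ring

theorem integral_polynomial_eval_derivative (p : ℝ[X]) (a b : ℝ) :
    ∫ x in a..b, (derivative p).eval x = p.eval b - p.eval a :=
  integral_eq_sub_of_hasDerivAt (fun x _ => p.hasDerivAt x)
    ((derivative p).continuous.intervalIntegrable a b)

theorem integral_mul_iterate_derivative_eq_zero {p q : ℝ[X]} {a b : ℝ} {n : ℕ}
    (ha : (X - C a) ^ n ∣ p) (hb : (X - C b) ^ n ∣ p) (hq : q.degree < n) :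
    ∫ x in a..b, q.eval x * (derivative^[n] p).eval x = 0 := by
  induction n generalizing q with
  | zero =>
    have hq_zero : q = 0 := by simpa using hq
    simp [hq_zero]
  | succ n ih =>
    have hboundary {c : ℝ} (hc : (X - C c) ^ (n + 1) ∣ p) : (derivative^[n] p).eval c = 0 := by
      have hdvd := pow_sub_dvd_iterate_derivative_of_pow_dvd n hc
      rw [Nat.add_sub_cancel_left, pow_one] at hdvd
      exact dvd_iff_isRoot.mp hdvd
    have hq' : (derivative q).degree < n := by
      rw [degree_lt_iff_coeff_zero] at hq ⊢
      intro m hm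
      rw [coeff_derivative, hq (m + 1) (Nat.succ_le_succ hm), zero_mul]
    have hparts := integral_mul_deriv_eq_deriv_mul (a := a) (b := b)
      (fun x _ => q.hasDerivAt x) (fun x _ => (derivative^[n] p).hasDerivAt x)
      ((derivative q).continuous.intervalIntegrable _ _)
      ((derivative (derivative^[n] p)).continuous.intervalIntegrable _ _)
    have hrest := ih ((pow_dvd_pow _ n.le_succ).trans ha) ((pow_dvd_pow _ n.le_succ).trans hb) hq'
    simp only [Function.iterate_succ_apply']
    rw [hparts, hrest, hboundary ha, hboundary hb, mul_zero, mul_zero, sub_zero, sub_zero]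

/-- The Legendre polynomial `legendre k` as an element of `ℝ[X]`, which gives access to degrees and
to the algebra of `Polynomial.derivative`. -/
noncomputable def legendrePoly (k : ℕ) : ℝ[X] :=
  C (1 / ((2 : ℝ) ^ k * (Nat.factorial k : ℝ))) * derivative^[k] ((X ^ 2 - 1) ^ k)

theorem natDegree_legendrePoly_le (k : ℕ) : (legendrePoly k).natDegree ≤ k := by
  have hbase : ((X ^ 2 - 1 : ℝ[X]) ^ k).natDegree ≤ k * 2 :=
    natDegree_pow_le_of_le k (natDegree_X_pow_sub_C (n := 2) (r := (1 : ℝ))).le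
  calc (legendrePoly k).natDegree
      ≤ (derivative^[k] ((X ^ 2 - 1 : ℝ[X]) ^ k)).natDegree := natDegree_C_mul_le _ _
    _ ≤ ((X ^ 2 - 1 : ℝ[X]) ^ k).natDegree - k := natDegree_iterate_derivative _ _
    _ ≤ k := by omega

theorem legendre_eq_eval_legendrePoly (k : ℕ) (x : ℝ) : legendre k x = (legendrePoly k).eval x := by
  have hbase : (fun y : ℝ => (y ^ 2 - 1) ^ k) = fun y => ((X ^ 2 - 1 : ℝ[X]) ^ k).eval y := by
    simp only [eval_pow, eval_sub, eval_X, eval_one]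
  rw [legendre, hbase, iteratedDeriv_polynomial_eval, legendrePoly, eval_mul, eval_C]

theorem continuous_legendre (k : ℕ) : Continuous (legendre k) := by
  rw [funext (legendre_eq_eval_legendrePoly k)]
  exact (legendrePoly k).continuous

theorem X_sq_sub_one_eq_mul {R : Type*} [CommRing R] :
    (X ^ 2 - 1 : R[X]) = (X - C 1) * (X - C (-1)) := by
  rw [C_neg, C_1]
  ring

theorem legendre_eq_sum (k : ℕ) (x : ℝ) :
    legendre k x = ∑ i ∈ Finset.range (k + 1),
      (k.choose i : ℝ) ^ 2 * (((x - 1) / 2) ^ i * ((x + 1) / 2) ^ (k - i)) := by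
  rw [legendre_eq_eval_legendrePoly, legendrePoly, X_sq_sub_one_eq_mul,
    iterate_derivative_X_sub_C_mul_X_sub_C_pow]
  simp only [eval_mul, eval_C, eval_natCast, eval_finsetSum, eval_pow, eval_sub, eval_X,
    sub_neg_eq_add, Finset.mul_sum]
  refine Finset.sum_congr rfl fun i hi => ?_
  have htwo : (2 : ℝ) ^ k = 2 ^ i * 2 ^ (k - i) := by
    rw [← pow_add, Nat.add_sub_cancel' (Finset.mem_range_succ_iff.mp hi)]
  rw [htwo, div_pow, div_pow]
  field_simp

theorem legendre_one (k : ℕ) : legendre k 1 = 1 := by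
  rw [legendre_eq_sum, Finset.sum_eq_single 0]
  · norm_num
  · intro i _ hi
    simp [hi]
  · simp

theorem legendre_neg_one (k : ℕ) : legendre k (-1) = (-1) ^ k := by
  rw [legendre_eq_sum, Finset.sum_eq_single k]
  · norm_num
  · intro i hi hik
    have hsub : k - i ≠ 0 := by
      have := Finset.mem_range_succ_iff.mp hi
      omega
    simp [hsub]
  · simp

theorem integral_eval_mul_legendre_eq_zero {k : ℕ} {q : ℝ[X]} (hq : q.degree < k) :
    ∫ x in (-1 : ℝ)..1, q.eval x * legendre k x = 0 := by
  have hzero : ∫ x in (-1 : ℝ)..1,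
      q.eval x * (derivative^[k] ((X ^ 2 - 1 : ℝ[X]) ^ k)).eval x = 0 := by
    rw [X_sq_sub_one_eq_mul, mul_pow]
    exact integral_mul_iterate_derivative_eq_zero (dvd_mul_left _ _) (dvd_mul_right _ _) hq
  simp only [legendre_eq_eval_legendrePoly, legendrePoly, eval_mul, eval_C,
    mul_left_comm (eval _ q), intervalIntegral.integral_const_mul, hzero, mul_zero]

theorem integral_legendre_sq (k : ℕ) :
    ∫ x in (-1 : ℝ)..1, legendre k x ^ 2 = 2 / (2 * k + 1) := by
  set p := legendrePoly k
  set r := X * derivative p - (k : ℝ[X]) * p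
  have horth : ∫ x in (-1 : ℝ)..1, r.eval x * legendre k x = 0 :=
    integral_eval_mul_legendre_eq_zero
      (degree_X_mul_derivative_sub_natCast_mul_lt (natDegree_legendrePoly_le k))
  have hderiv (x : ℝ) : (derivative (X * p ^ 2)).eval x =
      (2 * k + 1) * legendre k x ^ 2 + 2 * (r.eval x * legendre k x) := by
    rw [legendre_eq_eval_legendrePoly]
    simp only [p, r, derivative_mul, derivative_X, derivative_pow, one_mul, pow_one, eval_add,
      eval_sub, eval_mul, eval_pow, eval_X, eval_C,
      eval_natCast, Nat.cast_ofNat, Nat.add_one_sub_one]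
    ring
  have hends : ∫ x in (-1 : ℝ)..1, (derivative (X * p ^ 2)).eval x = 2 := by
    rw [integral_polynomial_eval_derivative]
    simp only [eval_mul, eval_pow, eval_X, p, ← legendre_eq_eval_legendrePoly, legendre_one,
      legendre_neg_one, ← pow_mul, mul_comm k 2, (even_two_mul k).neg_one_pow]
    norm_num
  have hsplit : ∫ x in (-1 : ℝ)..1, (derivative (X * p ^ 2)).eval x =
      (2 * k + 1) * (∫ x in (-1 : ℝ)..1, legendre k x ^ 2) +
        2 * ∫ x in (-1 : ℝ)..1, r.eval x * legendre k x := by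
    have hcont := continuous_legendre k
    simp only [hderiv]
    rw [intervalIntegral.integral_add, intervalIntegral.integral_const_mul,
      intervalIntegral.integral_const_mul]
    all_goals exact Continuous.intervalIntegrable (by fun_prop) _ _
  rw [hends, horth, mul_zero, add_zero] at hsplit
  rw [eq_div_iff (by positivity), mul_comm, ← hsplit]

end LegendrePoly

theorem one_le_legendre (k : ℕ) {x : ℝ} (hx : 1 ≤ x) : 1 ≤ legendre k x := by
  have : 0 ≤ (x - 1) / 2 := by linarith
  have hadd : 1 ≤ (x + 1) / 2 := by linarith
  rw [legendre_eq_sum]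
  calc (1 : ℝ) ≤ ((x + 1) / 2) ^ k := one_le_pow₀ hadd
    _ = (k.choose 0 : ℝ) ^ 2 * (((x - 1) / 2) ^ 0 * ((x + 1) / 2) ^ (k - 0)) := by simp
    _ ≤ _ := Finset.single_le_sum
      (f := fun i => (k.choose i : ℝ) ^ 2 * (((x - 1) / 2) ^ i * ((x + 1) / 2) ^ (k - i)))
      (fun i _ => by positivity) (by simp)

theorem legendre_le_two_mul_pow (k : ℕ) {x : ℝ} (hx : 1 ≤ x) : legendre k x ≤ (2 * x) ^ k := by
  have : 0 ≤ (x - 1) / 2 := by linarith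
  have : 0 ≤ (x + 1) / 2 := by linarith
  have hbinom : ∑ i ∈ Finset.range (k + 1),
      ((x - 1) / 2) ^ i * ((x + 1) / 2) ^ (k - i) * (k.choose i : ℝ) = x ^ k := by
    rw [← add_pow]
    ring
  rw [legendre_eq_sum, mul_pow, ← hbinom, Finset.mul_sum]
  refine Finset.sum_le_sum fun i _ => ?_
  have hchoose : (k.choose i : ℝ) ≤ 2 ^ k := by exact_mod_cast Nat.choose_le_two_pow k i
  calc (k.choose i : ℝ) ^ 2 * (((x - 1) / 2) ^ i * ((x + 1) / 2) ^ (k - i))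
      = k.choose i * (((x - 1) / 2) ^ i * ((x + 1) / 2) ^ (k - i) * k.choose i) := by ring
    _ ≤ _ := by gcongr

theorem sub_one_le_integral_legendre_sq (k : ℕ) {b : ℝ} (hb : 1 ≤ b) :
    b - 1 ≤ ∫ x in (1 : ℝ)..b, legendre k x ^ 2 := by
  calc b - 1 = ∫ _ in (1 : ℝ)..b, (1 : ℝ) := integral_one.symm
    _ ≤ _ := integral_mono_on hb intervalIntegrable_const
      (((continuous_legendre k).pow 2).intervalIntegrable _ _)
      fun x hx => one_le_pow₀ (one_le_legendre k hx.1)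

theorem integral_legendre_sq_le (k : ℕ) {b : ℝ} (hb : 1 ≤ b) :
    ∫ x in (1 : ℝ)..b, legendre k x ^ 2 ≤ 2 ^ (2 * k) * ((b ^ (2 * k + 1) - 1) / (2 * k + 1)) := by
  have hbound {x : ℝ} (hx : 1 ≤ x) : legendre k x ^ 2 ≤ 2 ^ (2 * k) * x ^ (2 * k) := by
    rw [← mul_pow, pow_mul']
    exact pow_le_pow_left₀ (zero_le_one.trans (one_le_legendre k hx))
      (legendre_le_two_mul_pow k hx) 2
  calc ∫ x in (1 : ℝ)..b, legendre k x ^ 2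
      ≤ ∫ x in (1 : ℝ)..b, 2 ^ (2 * k) * x ^ (2 * k) :=
        integral_mono_on hb (((continuous_legendre k).pow 2).intervalIntegrable _ _)
          (Continuous.intervalIntegrable (by fun_prop) _ _) fun x hx => hbound hx.1
    _ = 2 ^ (2 * k) * ((b ^ (2 * k + 1) - 1) / (2 * k + 1)) := by
        rw [intervalIntegral.integral_const_mul, integral_pow]
        simp

/-- Lemma 3.2: `1 ≤ c_k < 2^(2k-1) 3^(2k+1)` where
`c_k = (∫₁³ L_k² dx) / (∫₋₁¹ L_k² dx)`; equivalently (using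
`∫₋₁¹ L_k² dx = 2/(2k+1)`),
`∫₋₁¹ L_k² dx ≤ ∫₁³ L_k² dx < 2^(2k-1) 3^(2k+1) (2/(2k+1))`. -/
theorem eset_lemma32 (k : ℕ) :
    (∫ x in (-1 : ℝ)..1, (legendre k x) ^ 2) ≤ (∫ x in (1 : ℝ)..3, (legendre k x) ^ 2) ∧
    (∫ x in (1 : ℝ)..3, (legendre k x) ^ 2) <
      (2 : ℝ) ^ (2 * (k : ℤ) - 1) * (3 : ℝ) ^ (2 * (k : ℤ) + 1) *
        (2 / (2 * (k : ℝ) + 1)) := by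
  constructor
  · calc ∫ x in (-1 : ℝ)..1, legendre k x ^ 2 = 2 / (2 * k + 1) := integral_legendre_sq k
      _ ≤ 2 := div_le_self zero_le_two (by simp)
      _ = 3 - 1 := by norm_num
      _ ≤ _ := sub_one_le_integral_legendre_sq k (by norm_num)
  · calc ∫ x in (1 : ℝ)..3, legendre k x ^ 2
        ≤ 2 ^ (2 * k) * ((3 ^ (2 * k + 1) - 1) / (2 * k + 1)) :=
          integral_legendre_sq_le k (by norm_num)
      _ < 2 ^ (2 * k) * (3 ^ (2 * k + 1) / (2 * k + 1)) := by
          gcongr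
          exact sub_one_lt _
      _ = _ := by
          rw [zpow_sub₀ two_ne_zero]
          norm_cast
          push_cast
          ring
end

section
/- Fix integers M ≥ 1, N ≥ 1, reals ε > 0 and a < b, a continuous function g : [−1,1] × [a,b] → ℝ, and a real polynomial u₀ of degree at most M with u₀(−1) = u₀(1) = 0. Then there exists exactly one h ∈ V_{M,N} with h(x,a) = u₀(x) for all x ∈ [−1,1] such that ∫_a^b ∫₋₁¹ [∂_t h·w + ε ∂_x h·∂_x w + g·w] dx dt = 0 for every w ∈ W_{M,N−1}. -/
open MeasureTheory intervalIntegral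

/-- `h(x,t)` is a real polynomial function of degree at most `M` in `x` and
at most `N` in `t`. -/
def IsPolyMN (M N : ℕ) (h : ℝ → ℝ → ℝ) : Prop :=
  ∃ c : Fin (M + 1) → Fin (N + 1) → ℝ,
    ∀ x t : ℝ, h x t = ∑ i : Fin (M + 1), ∑ j : Fin (N + 1),
      c i j * x ^ (i : ℕ) * t ^ (j : ℕ)

/-- The trial space `V_{M,N}`: polynomial functions of degree at most `M` in
`x` and at most `N` in `t`, vanishing at `x = ±1`. -/
def MemV (M N : ℕ) (h : ℝ → ℝ → ℝ) : Prop :=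
  IsPolyMN M N h ∧ ∀ t : ℝ, h (-1) t = 0 ∧ h 1 t = 0

/-- The test space `W_{M,N−1}`: polynomial functions of degree at most `M` in
`x` and at most `N−1` in `t`, vanishing at `x = ±1`. -/
def MemW (M N : ℕ) (w : ℝ → ℝ → ℝ) : Prop :=
  IsPolyMN M (N - 1) w ∧ ∀ t : ℝ, w (-1) t = 0 ∧ w 1 t = 0

/-- Partial derivative in time. -/
noncomputable def ptd (h : ℝ → ℝ → ℝ) (x t : ℝ) : ℝ := deriv (fun s => h x s) t

/-- Partial derivative in space. -/
noncomputable def pxd (h : ℝ → ℝ → ℝ) (x t : ℝ) : ℝ := deriv (fun y => h y t) x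

/-!
Write `B(h, w) = ∫∫ (∂ₜh w + ε ∂ₓh ∂ₓw)`. If `h` vanishes at the initial time `a`, then testing with
`∂ₜh`, which is an admissible test function, gives
`B(h, ∂ₜh) = ∫∫ (∂ₜh)² + (ε / 2) ∫ (∂ₓh(x, b))² dx`, so `B(h, ·) = 0` forces `∂ₜh = 0` and hence
`h = 0`. Multiplication by `t - a` embeds the test space into the space of trial functions vanishing
at `a`, so the map `h ↦ B(h, ·)` from the latter into the dual of the test space is injective
between finite-dimensional spaces of equal dimension, hence bijective. Subtracting the initial datum
reduces the Galerkin problem to inverting this map.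
-/

section LinearAlgebra

theorem bijective_of_injective_to_dual {K V W : Type*} [Field K] [AddCommMonoid V] [Module K V]
    [AddCommGroup W] [Module K W] [FiniteDimensional K W] {B : V →ₗ[K] Module.Dual K W}
    {J : W →ₗ[K] V} (hB : Function.Injective B) (hJ : Function.Injective J) :
    Function.Bijective B := by
  have hBJ : Function.Surjective (B ∘ₗ J) :=
    (LinearMap.injective_iff_surjective_of_finrank_eq_finrank Subspace.dual_finrank_eq.symm).mp
      (hB.comp hJ)
  exact ⟨hB, Function.Surjective.of_comp hBJ⟩

theorem existsUnique_of_bijective_domRestrict_ker {R V U F : Type*} [Ring R] [AddCommGroup V]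
    [Module R V] [AddCommGroup U] [Module R U] [AddCommGroup F] [Module R F] {T : V →ₗ[R] U}
    {B : V →ₗ[R] F}
    (hB : Function.Bijective (B.domRestrict (LinearMap.ker T))) (u : V) (ℓ : F) :
    ∃! v, T v = T u ∧ B v = ℓ := by
  obtain ⟨d, hd⟩ := hB.surjective (ℓ - B u)
  have hBd : B d = ℓ - B u := hd
  have hTd : T d = 0 := d.2
  refine ⟨u + d, ⟨by rw [map_add, hTd, add_zero], by rw [map_add, hBd, add_sub_cancel]⟩, ?_⟩
  rintro v ⟨hTv, hBv⟩
  have hvu : v - u ∈ LinearMap.ker T := by rw [LinearMap.mem_ker, map_sub, hTv, sub_self]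
  have hvd : (⟨v - u, hvu⟩ : LinearMap.ker T) = d :=
    hB.injective (by rw [hd, LinearMap.domRestrict_apply, map_sub, hBv])
  rw [← hvd, add_sub_cancel]

end LinearAlgebra

section Integration

theorem eqOn_zero_of_setIntegral_nonpos {X : Type*} [TopologicalSpace X] [T2Space X]
    [MeasurableSpace X] [OpensMeasurableSpace X] {μ : Measure X} [μ.IsOpenPosMeasure]
    [IsFiniteMeasureOnCompacts μ] {K : Set X} {f : X → ℝ} (hK : IsCompact K)
    (hKint : K ⊆ closure (interior K)) (hf : ContinuousOn f K) (hnonneg : ∀ x ∈ K, 0 ≤ f x)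
    (hint : ∫ x in K, f x ∂μ ≤ 0) : Set.EqOn f 0 K := by
  have hzero : ∫ x in K, f x ∂μ = 0 :=
    hint.antisymm (setIntegral_nonneg hK.measurableSet hnonneg)
  have hae : f =ᵐ[μ.restrict K] 0 :=
    (setIntegral_eq_zero_iff_of_nonneg_ae (ae_restrict_of_forall_mem hK.measurableSet hnonneg)
      (hf.integrableOn_compact hK)).mp hzero
  exact Measure.eqOn_of_ae_eq hae hf continuousOn_const hKint

theorem intervalIntegral_intervalIntegral_eq_setIntegral_prod {E : Type*} [NormedAddCommGroup E]
    [NormedSpace ℝ E] {a b c d : ℝ} {f : ℝ × ℝ → E} (hcd : c ≤ d) (hab : a ≤ b)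
    (hf : IntegrableOn f (Set.Icc c d ×ˢ Set.Icc a b)) :
    ∫ t in a..b, ∫ x in c..d, f (x, t) = ∫ p in Set.Icc c d ×ˢ Set.Icc a b, f p := by
  simp only [intervalIntegral.integral_of_le hab, intervalIntegral.integral_of_le hcd,
    ← integral_Icc_eq_integral_Ioc]
  rw [Measure.volume_eq_prod, ← setIntegral_prod_swap]
  exact (setIntegral_prod _ hf.swap).symm

end Integration

section PolynomialFunctions

variable {M N : ℕ} {h k : ℝ → ℝ → ℝ}

/-- The polynomial function with a given matrix of coefficients, as a linear map; its range is the
set of functions satisfying `IsPolyMN M N`. -/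
def ofCoeffs (M N : ℕ) : (Fin (M + 1) → Fin (N + 1) → ℝ) →ₗ[ℝ] ℝ → ℝ → ℝ where
  toFun c x t := ∑ i, ∑ j, c i j * x ^ (i : ℕ) * t ^ (j : ℕ)
  map_add' c d := by
    ext x t
    simp only [Pi.add_apply, add_mul, Finset.sum_add_distrib]
  map_smul' r c := by
    ext x t
    simp only [Pi.smul_apply, smul_eq_mul, Finset.mul_sum, mul_assoc, RingHom.id_apply]

theorem isPolyMN_iff_mem_range : IsPolyMN M N h ↔ h ∈ LinearMap.range (ofCoeffs M N) :=
  ⟨fun ⟨c, hc⟩ => ⟨c, funext₂ fun x t => (hc x t).symm⟩, fun ⟨c, hc⟩ => ⟨c, fun _ _ => hc ▸ rfl⟩⟩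

theorem isPolyMN_zero : IsPolyMN M N 0 :=
  isPolyMN_iff_mem_range.mpr (zero_mem _)

theorem IsPolyMN.add (hh : IsPolyMN M N h) (hk : IsPolyMN M N k) : IsPolyMN M N (h + k) :=
  isPolyMN_iff_mem_range.mpr
    (add_mem (isPolyMN_iff_mem_range.mp hh) (isPolyMN_iff_mem_range.mp hk))

theorem IsPolyMN.smul (r : ℝ) (hh : IsPolyMN M N h) : IsPolyMN M N (r • h) :=
  isPolyMN_iff_mem_range.mpr (Submodule.smul_mem _ r (isPolyMN_iff_mem_range.mp hh))

theorem ofCoeffs_swap (c : Fin (M + 1) → Fin (N + 1) → ℝ) :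
    (fun t x => ofCoeffs M N c x t) = ofCoeffs N M fun j i => c i j := by
  ext t x
  simp only [ofCoeffs, LinearMap.coe_mk, AddHom.coe_mk, mul_right_comm _ (x ^ _)]
  exact Finset.sum_comm

theorem IsPolyMN.swap (hh : IsPolyMN M N h) : IsPolyMN N M fun t x => h x t := by
  obtain ⟨c, rfl⟩ := isPolyMN_iff_mem_range.mp hh
  exact isPolyMN_iff_mem_range.mpr ⟨_, (ofCoeffs_swap c).symm⟩

theorem IsPolyMN.succ_right (hh : IsPolyMN M N h) : IsPolyMN M (N + 1) h := by
  obtain ⟨c, hc⟩ := hh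
  refine ⟨fun i => Fin.snoc (c i) 0, fun x t => ?_⟩
  simp only [hc, Fin.sum_univ_castSucc (n := N + 1), Fin.snoc_castSucc, Fin.snoc_last,
    Fin.val_castSucc, zero_mul, add_zero]

theorem IsPolyMN.succ_left (hh : IsPolyMN M N h) : IsPolyMN (M + 1) N h :=
  hh.swap.succ_right.swap

theorem IsPolyMN.mul_right_var (hh : IsPolyMN M N h) :
    IsPolyMN M (N + 1) fun x t => t * h x t := by
  obtain ⟨c, hc⟩ := hh
  refine ⟨fun i => Fin.cons 0 (c i), fun x t => ?_⟩
  simp only [hc, Fin.sum_univ_succ (n := N + 1), Fin.cons_zero, Fin.cons_succ, Fin.val_succ,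
    zero_mul, zero_add, mul_comm t, Finset.sum_mul, pow_succ, mul_assoc]

theorem isPolyMN_polynomial_eval {u : Polynomial ℝ} (hu : u.natDegree ≤ M) :
    IsPolyMN M N fun x _ => u.eval x := by
  refine ⟨fun i => Fin.cons (u.coeff i) 0, fun x t => ?_⟩
  simp [Fin.sum_univ_succ (n := N), Polynomial.eval_eq_sum_range' (Nat.lt_succ_of_le hu),
    Finset.sum_range]

theorem IsPolyMN.continuous (hh : IsPolyMN M N h) : Continuous fun p : ℝ × ℝ => h p.1 p.2 := by
  obtain ⟨c, hc⟩ := hh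
  simp only [hc]
  fun_prop

theorem IsPolyMN.exists_polynomial_left (hh : IsPolyMN M N h) (t : ℝ) :
    ∃ P : Polynomial ℝ, ∀ x, h x t = P.eval x := by
  obtain ⟨c, hc⟩ := hh
  refine ⟨∑ i, ∑ j, Polynomial.C (c i j * t ^ (j : ℕ)) * Polynomial.X ^ (i : ℕ), fun x => ?_⟩
  simp only [hc, Polynomial.eval_finsetSum, Polynomial.eval_mul, Polynomial.eval_C,
    Polynomial.eval_pow, Polynomial.eval_X, mul_right_comm]

theorem IsPolyMN.eq_zero_of_infinite_left (hh : IsPolyMN M N h) {S : Set ℝ} (hS : S.Infinite)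
    {t : ℝ} (h0 : ∀ x ∈ S, h x t = 0) (x : ℝ) : h x t = 0 := by
  obtain ⟨P, hP⟩ := hh.exists_polynomial_left t
  have hP0 : P = 0 := P.eq_zero_of_infinite_isRoot (hS.mono fun y hy => (hP y).symm.trans (h0 y hy))
  rw [hP, hP0, Polynomial.eval_zero]

theorem IsPolyMN.eq_zero_of_infinite_prod (hh : IsPolyMN M N h) {S T : Set ℝ} (hS : S.Infinite)
    (hT : T.Infinite) (h0 : ∀ x ∈ S, ∀ t ∈ T, h x t = 0) : h = 0 :=
  funext₂ fun x _ => hh.swap.eq_zero_of_infinite_left hT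
    (fun s hs => hh.eq_zero_of_infinite_left hS (fun y hy => h0 y hy s hs) x) _

end PolynomialFunctions

section PartialDerivatives

variable {M N : ℕ} {h k : ℝ → ℝ → ℝ}

theorem hasDerivAt_sum_mul_pow {m n : ℕ} (c : Fin m → Fin n → ℝ) (A : Fin m → ℝ) (t : ℝ) :
    HasDerivAt (fun s => ∑ i, ∑ j, c i j * A i * s ^ (j : ℕ))
      (∑ i, ∑ j, c i j * A i * ((j : ℕ) * t ^ ((j : ℕ) - 1))) t :=
  HasDerivAt.fun_sum fun _ _ => HasDerivAt.fun_sum fun _ _ => (hasDerivAt_pow _ t).const_mul _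

theorem IsPolyMN.hasDerivAt_ptd (hh : IsPolyMN M N h) (x t : ℝ) :
    HasDerivAt (fun s => h x s) (ptd h x t) t := by
  obtain ⟨c, hc⟩ := hh
  refine DifferentiableAt.hasDerivAt ?_
  simp only [hc]
  exact (hasDerivAt_sum_mul_pow c (fun i => x ^ (i : ℕ)) t).differentiableAt

theorem IsPolyMN.hasDerivAt_pxd (hh : IsPolyMN M N h) (x t : ℝ) :
    HasDerivAt (fun y => h y t) (pxd h x t) x :=
  hh.swap.hasDerivAt_ptd t x

theorem IsPolyMN.ptd_add (hh : IsPolyMN M N h) (hk : IsPolyMN M N k) :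
    ptd (h + k) = ptd h + ptd k :=
  funext₂ fun x t => ((hh.hasDerivAt_ptd x t).add (hk.hasDerivAt_ptd x t)).deriv

theorem IsPolyMN.pxd_add (hh : IsPolyMN M N h) (hk : IsPolyMN M N k) :
    pxd (h + k) = pxd h + pxd k :=
  funext₂ fun x t => ((hh.hasDerivAt_pxd x t).add (hk.hasDerivAt_pxd x t)).deriv

theorem ptd_smul (r : ℝ) (h : ℝ → ℝ → ℝ) : ptd (r • h) = r • ptd h :=
  funext₂ fun _ _ => deriv_const_mul_field r

theorem pxd_smul (r : ℝ) (h : ℝ → ℝ → ℝ) : pxd (r • h) = r • pxd h :=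
  funext₂ fun _ _ => deriv_const_mul_field r

theorem ptd_ofCoeffs (c : Fin (M + 1) → Fin (N + 2) → ℝ) :
    ptd (ofCoeffs M (N + 1) c) = ofCoeffs M N fun i j => c i j.succ * (j + 1) := by
  ext x t
  refine (hasDerivAt_sum_mul_pow c (fun i => x ^ (i : ℕ)) t).deriv.trans ?_
  simp [ofCoeffs, Fin.sum_univ_succ (n := N + 1), mul_assoc, mul_left_comm]

theorem pxd_ofCoeffs (c : Fin (M + 2) → Fin (N + 1) → ℝ) :
    pxd (ofCoeffs (M + 1) N c) = ofCoeffs M N fun i j => c i.succ j * (i + 1) :=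
  calc pxd (ofCoeffs (M + 1) N c)
    _ = fun x t => ptd (fun s y => ofCoeffs (M + 1) N c y s) t x := rfl
    _ = ofCoeffs M N fun i j => c i.succ j * (i + 1) := by
      simp only [ofCoeffs_swap, ptd_ofCoeffs]

theorem isPolyMN_ptd (hh : IsPolyMN M (N + 1) h) : IsPolyMN M N (ptd h) := by
  obtain ⟨c, rfl⟩ := isPolyMN_iff_mem_range.mp hh
  exact isPolyMN_iff_mem_range.mpr ⟨_, (ptd_ofCoeffs c).symm⟩

theorem IsPolyMN.continuous_ptd (hh : IsPolyMN M N h) :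
    Continuous fun p : ℝ × ℝ => ptd h p.1 p.2 :=
  (isPolyMN_ptd hh.succ_right).continuous

theorem isPolyMN_pxd (hh : IsPolyMN M N h) : IsPolyMN M N (pxd h) := by
  obtain ⟨c, rfl⟩ := isPolyMN_iff_mem_range.mp hh.succ_left
  exact isPolyMN_iff_mem_range.mpr ⟨_, (pxd_ofCoeffs c).symm⟩

theorem IsPolyMN.pxd_ptd_comm (hh : IsPolyMN M N h) :
    pxd (ptd h) = ptd (pxd h) := by
  obtain ⟨c, rfl⟩ := isPolyMN_iff_mem_range.mp hh.succ_left.succ_right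
  simp only [ptd_ofCoeffs, pxd_ofCoeffs, mul_right_comm]

end PartialDerivatives

section Spaces

variable {M N : ℕ} {a : ℝ}

/-- The submodule of functions satisfying `MemV M N`. As `MemW M (N + 1)` unfolds to `MemV M N`, it
is both the trial space of time degree `N` and the test space of the scheme of time degree
`N + 1`. -/
def trialSpace (M N : ℕ) : Submodule ℝ (ℝ → ℝ → ℝ) where
  carrier := {h | MemV M N h}
  add_mem' hh hk := ⟨hh.1.add hk.1, fun t => by simp [hh.2, hk.2]⟩
  zero_mem' := ⟨isPolyMN_zero, fun t => by simp⟩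
  smul_mem' r _ hh := ⟨hh.1.smul r, fun t => by simp [hh.2]⟩

instance finiteDimensional_trialSpace (M N : ℕ) : FiniteDimensional ℝ (trialSpace M N) :=
  Submodule.finiteDimensional_of_le (S₂ := LinearMap.range (ofCoeffs M N))
    fun _ hh => isPolyMN_iff_mem_range.mp hh.1

/-- The time derivative of a trial function, as a test function. -/
noncomputable def timeDeriv (h : trialSpace M (N + 1)) : trialSpace M N :=
  ⟨ptd h, isPolyMN_ptd h.2.1, fun t => by simp [ptd, h.2.2]⟩

theorem memV_sub_mul {h : ℝ → ℝ → ℝ} (a : ℝ) (hh : MemV M N h) :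
    MemV M (N + 1) fun x t => (t - a) * h x t := by
  refine ⟨?_, fun t => by simp [hh.2]⟩
  convert hh.1.mul_right_var.add (hh.1.succ_right.smul (-a)) using 3 with x t
  simp only [Pi.add_apply, Pi.smul_apply, smul_eq_mul]
  ring

/-- The trace at the initial time `a`. -/
def initialTrace (a : ℝ) : trialSpace M N →ₗ[ℝ] ℝ → ℝ where
  toFun h x := (h : ℝ → ℝ → ℝ) x a
  map_add' _ _ := rfl
  map_smul' _ _ := rfl

theorem initialTrace_eq_iff_eqOn {S : Set ℝ} (hS : S.Infinite) (h k : trialSpace M N) :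
    initialTrace a h = initialTrace a k ↔
      ∀ x ∈ S, (h : ℝ → ℝ → ℝ) x a = (k : ℝ → ℝ → ℝ) x a := by
  refine ⟨fun heq x _ => congrFun heq x, fun heq => funext fun x => ?_⟩
  exact sub_eq_zero.mp <|
    (h - k).2.1.eq_zero_of_infinite_left hS (fun y hy => sub_eq_zero.mpr (heq y hy)) x

/-- The subspace of trial functions vanishing at the initial time `a`. -/
abbrev homogeneousTrialSpace (M N : ℕ) (a : ℝ) : Submodule ℝ (trialSpace M N) :=
  LinearMap.ker (initialTrace a)

/-- Multiplication by `t - a`, as a map from the test space to the space of trial functions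
vanishing at the initial time `a`. -/
def mulTime (M N : ℕ) (a : ℝ) : trialSpace M N →ₗ[ℝ] homogeneousTrialSpace M (N + 1) a where
  toFun w := ⟨⟨fun x t => (t - a) * (w : ℝ → ℝ → ℝ) x t, memV_sub_mul a w.2⟩,
    funext fun x => by simp [initialTrace]⟩
  map_add' v w := by ext x t; exact mul_add _ _ _
  map_smul' r w := by ext x t; exact mul_left_comm _ _ _

theorem mulTime_injective (M N : ℕ) (a : ℝ) : Function.Injective (mulTime M N a) := by
  refine (injective_iff_map_eq_zero _).mpr fun w hw => Subtype.ext ?_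
  refine w.2.1.eq_zero_of_infinite_prod Set.infinite_univ (Set.Ioi_infinite a) fun x _ t ht => ?_
  have hxt : (t - a) * (w : ℝ → ℝ → ℝ) x t = 0 :=
    congrFun₂ (congrArg Subtype.val (congrArg Subtype.val hw)) x t
  exact (mul_eq_zero.mp hxt).resolve_left (sub_pos.mpr ht).ne'

end Spaces

section HeatForm

variable {M N N' : ℕ} {ε a b : ℝ} {h w : ℝ → ℝ → ℝ}

/-- The space–time slab `[-1, 1] × [a, b]`. -/
abbrev slab (a b : ℝ) : Set (ℝ × ℝ) := Set.Icc (-1) 1 ×ˢ Set.Icc a b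

theorem isCompact_slab : IsCompact (slab a b) := isCompact_Icc.prod isCompact_Icc

theorem integrableOn_slab_of_continuous {f : ℝ × ℝ → ℝ} (hf : Continuous f) :
    IntegrableOn f (slab a b) :=
  hf.continuousOn.integrableOn_compact isCompact_slab

theorem slab_subset_closure_interior (hab : a < b) : slab a b ⊆ closure (interior (slab a b)) := by
  rw [slab, interior_prod_eq, closure_prod_eq, closure_interior_Icc (by norm_num),
    closure_interior_Icc hab.ne]

/-- The integrand of the weak form of the heat operator `∂ₜ - ε ∂ₓₓ`. -/
noncomputable def heatDensity (ε : ℝ) (h w : ℝ → ℝ → ℝ) (p : ℝ × ℝ) : ℝ :=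
  ptd h p.1 p.2 * w p.1 p.2 + ε * pxd h p.1 p.2 * pxd w p.1 p.2

theorem integrableOn_heatDensity (hh : IsPolyMN M N h) (hw : IsPolyMN M N' w) :
    IntegrableOn (heatDensity ε h w) (slab a b) :=
  integrableOn_slab_of_continuous <| (hh.continuous_ptd.mul hw.continuous).add
    ((continuous_const.mul (isPolyMN_pxd hh).continuous).mul (isPolyMN_pxd hw).continuous)

/-- The space–time bilinear form of the heat operator `∂ₜ - ε ∂ₓₓ`. -/
noncomputable def heatForm (ε a b : ℝ) :
    trialSpace M N →ₗ[ℝ] trialSpace M N' →ₗ[ℝ] ℝ :=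
  LinearMap.mk₂ ℝ (fun h w => ∫ p in slab a b, heatDensity ε h w p)
    (fun h k w => by
      rw [← MeasureTheory.integral_add (integrableOn_heatDensity h.2.1 w.2.1)
        (integrableOn_heatDensity k.2.1 w.2.1)]
      congr 1 with p
      simp only [heatDensity, Submodule.coe_add, h.2.1.ptd_add k.2.1, h.2.1.pxd_add k.2.1,
        Pi.add_apply]
      ring)
    (fun r h w => by
      rw [smul_eq_mul, ← MeasureTheory.integral_const_mul]
      congr 1 with p
      simp only [heatDensity, Submodule.coe_smul, ptd_smul, pxd_smul, Pi.smul_apply, smul_eq_mul]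
      ring)
    (fun h v w => by
      rw [← MeasureTheory.integral_add (integrableOn_heatDensity h.2.1 v.2.1)
        (integrableOn_heatDensity h.2.1 w.2.1)]
      congr 1 with p
      simp only [heatDensity, Submodule.coe_add, v.2.1.pxd_add w.2.1, Pi.add_apply]
      ring)
    (fun r h w => by
      rw [smul_eq_mul, ← MeasureTheory.integral_const_mul]
      congr 1 with p
      simp only [heatDensity, Submodule.coe_smul, pxd_smul, Pi.smul_apply, smul_eq_mul]
      ring)

/-- The pairing with a source `g` integrable over the slab. -/
noncomputable def sourceForm {g : ℝ → ℝ → ℝ}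
    (hg : IntegrableOn (fun p : ℝ × ℝ => g p.1 p.2) (slab a b)) :
    Module.Dual ℝ (trialSpace M N) where
  toFun w := ∫ p in slab a b, g p.1 p.2 * (w : ℝ → ℝ → ℝ) p.1 p.2
  map_add' v w := by
    rw [← MeasureTheory.integral_add
      (hg.mul_continuousOn v.2.1.continuous.continuousOn isCompact_slab)
      (hg.mul_continuousOn w.2.1.continuous.continuousOn isCompact_slab)]
    simp only [Submodule.coe_add, Pi.add_apply, mul_add]
  map_smul' r w := by
    simp only [Submodule.coe_smul, Pi.smul_apply, smul_eq_mul, mul_left_comm _ r,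
      MeasureTheory.integral_const_mul, RingHom.id_apply]

theorem iteratedIntegral_eq_heatForm_add_sourceForm (hab : a ≤ b) {g : ℝ → ℝ → ℝ}
    (hg : IntegrableOn (fun p : ℝ × ℝ => g p.1 p.2) (slab a b)) (h : trialSpace M N)
    (w : trialSpace M N') :
    (∫ t in a..b, ∫ x in (-1 : ℝ)..1,
      (ptd h x t * (w : ℝ → ℝ → ℝ) x t + ε * pxd h x t * pxd w x t +
        g x t * (w : ℝ → ℝ → ℝ) x t)) = heatForm ε a b h w + sourceForm hg w := by
  have hheat : IntegrableOn (heatDensity ε h w) (slab a b) := integrableOn_heatDensity h.2.1 w.2.1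
  have hsource := hg.mul_continuousOn w.2.1.continuous.continuousOn isCompact_slab
  exact (intervalIntegral_intervalIntegral_eq_setIntegral_prod (by norm_num) hab
    (hheat.add hsource)).trans (MeasureTheory.integral_add hheat hsource)

end HeatForm

section Coercivity

variable {M N : ℕ} {ε a b : ℝ}

theorem IsPolyMN.setIntegral_mul_ptd {h : ℝ → ℝ → ℝ} (hh : IsPolyMN M N h) (hab : a ≤ b) :
    ∫ p in slab a b, h p.1 p.2 * ptd h p.1 p.2 =
      ∫ x in Set.Icc (-1 : ℝ) 1, (h x b ^ 2 - h x a ^ 2) / 2 := by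
  have hcont : Continuous fun p : ℝ × ℝ => h p.1 p.2 * ptd h p.1 p.2 :=
    hh.continuous.mul hh.continuous_ptd
  rw [Measure.volume_eq_prod, setIntegral_prod _ (integrableOn_slab_of_continuous hcont)]
  congr 1 with x
  have hderiv (t : ℝ) : HasDerivAt (fun s => h x s ^ 2 / 2) (h x t * ptd h x t) t := by
    refine (((hh.hasDerivAt_ptd x t).fun_pow 2).div_const 2).congr_deriv ?_
    push_cast
    ring
  rw [integral_Icc_eq_integral_Ioc, ← intervalIntegral.integral_of_le hab,
    intervalIntegral.integral_eq_sub_of_hasDerivAt (fun t _ => hderiv t)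
      ((hcont.comp (Continuous.prodMk_right x)).intervalIntegrable _ _), sub_div]

theorem heatForm_timeDeriv_eq (hab : a ≤ b) {h : trialSpace M (N + 1)}
    (h0 : initialTrace a h = 0) :
    heatForm ε a b h (timeDeriv h) =
      (∫ p in slab a b, ptd h p.1 p.2 ^ 2) + ε * ∫ x in Set.Icc (-1 : ℝ) 1, pxd h x b ^ 2 / 2 := by
  have hpx := isPolyMN_pxd h.2.1
  have hpxa (x : ℝ) : pxd h x a = 0 := (congrArg (deriv · x) h0).trans (deriv_const x 0)
  have hgrad : ∫ x in Set.Icc (-1 : ℝ) 1, pxd h x b ^ 2 / 2 =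
      ∫ p in slab a b, pxd h p.1 p.2 * pxd (ptd h) p.1 p.2 := by
    rw [h.2.1.pxd_ptd_comm, hpx.setIntegral_mul_ptd hab]
    simp [hpxa]
  have hsq : IntegrableOn (fun p => ptd h p.1 p.2 ^ 2) (slab a b) :=
    integrableOn_slab_of_continuous (h.2.1.continuous_ptd.pow 2)
  have hcross : IntegrableOn (fun p => ε * (pxd h p.1 p.2 * pxd (ptd h) p.1 p.2)) (slab a b) :=
    integrableOn_slab_of_continuous <| continuous_const.mul <|
      hpx.continuous.mul (isPolyMN_pxd (timeDeriv h).2.1).continuous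
  rw [hgrad, ← MeasureTheory.integral_const_mul, ← MeasureTheory.integral_add hsq hcross]
  refine setIntegral_congr_fun isCompact_slab.measurableSet fun p _ => ?_
  simp only [heatDensity, timeDeriv, sq, mul_assoc]

theorem eq_zero_of_heatForm_timeDeriv_eq_zero (hε : 0 ≤ ε) (hab : a < b)
    {h : trialSpace M (N + 1)} (h0 : initialTrace a h = 0)
    (hform : heatForm ε a b h (timeDeriv h) = 0) : h = 0 := by
  have hpt := isPolyMN_ptd h.2.1
  have hgrad : 0 ≤ ε * ∫ x in Set.Icc (-1 : ℝ) 1, pxd h x b ^ 2 / 2 :=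
    mul_nonneg hε (MeasureTheory.integral_nonneg fun x => by positivity)
  have hsq : Set.EqOn (fun p : ℝ × ℝ => ptd h p.1 p.2 ^ 2) 0 (slab a b) :=
    eqOn_zero_of_setIntegral_nonpos (μ := volume) isCompact_slab (slab_subset_closure_interior hab)
      (hpt.continuous.pow 2).continuousOn (fun p _ => sq_nonneg _)
      (by linarith [heatForm_timeDeriv_eq (ε := ε) hab.le h0])
  have hptd : ptd h = 0 :=
    hpt.eq_zero_of_infinite_prod (Set.Icc_infinite (by norm_num)) (Set.Icc_infinite hab)
      fun x hx t ht => pow_eq_zero_iff two_ne_zero |>.mp (hsq (Set.mk_mem_prod hx ht))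
  ext x t
  exact (is_const_of_deriv_eq_zero (fun s => (h.2.1.hasDerivAt_ptd x s).differentiableAt)
    (congrFun₂ hptd x) t a).trans (congrFun h0 x)

end Coercivity

section WellPosedness

variable {M N : ℕ} {ε a b : ℝ}

theorem bijective_heatForm_domRestrict (hε : 0 ≤ ε) (hab : a < b) :
    Function.Bijective
      ((heatForm ε a b : _ →ₗ[ℝ] trialSpace M N →ₗ[ℝ] ℝ).domRestrict
        (homogeneousTrialSpace M (N + 1) a)) := by
  refine bijective_of_injective_to_dual ((injective_iff_map_eq_zero _).mpr fun h hh => ?_)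
    (mulTime_injective M N a)
  exact Subtype.ext <|
    eq_zero_of_heatForm_timeDeriv_eq_zero hε hab h.2 (LinearMap.congr_fun hh (timeDeriv h.1))

theorem existsUnique_heatForm_eq (hε : 0 ≤ ε) (hab : a < b) (u : trialSpace M (N + 1))
    (ℓ : Module.Dual ℝ (trialSpace M N)) :
    ∃! h : trialSpace M (N + 1), initialTrace a h = initialTrace a u ∧ heatForm ε a b h = ℓ :=
  existsUnique_of_bijective_domRestrict_ker (bijective_heatForm_domRestrict hε hab) u ℓ

theorem heatForm_eq_neg_sourceForm_iff (hab : a ≤ b) {g : ℝ → ℝ → ℝ}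
    (hg : IntegrableOn (fun p : ℝ × ℝ => g p.1 p.2) (slab a b)) (h : trialSpace M (N + 1)) :
    heatForm ε a b h = -(sourceForm hg : Module.Dual ℝ (trialSpace M N)) ↔
      ∀ w : ℝ → ℝ → ℝ, MemW M (N + 1) w →
        (∫ t in a..b, ∫ x in (-1 : ℝ)..1,
          (ptd h x t * w x t + ε * pxd h x t * pxd w x t + g x t * w x t)) = 0 := by
  have hint (w : trialSpace M N) :=
    iteratedIntegral_eq_heatForm_add_sourceForm (ε := ε) hab hg h w
  rw [eq_neg_iff_add_eq_zero]
  exact ⟨fun heq w hw => (hint ⟨w, hw⟩).trans (LinearMap.congr_fun heq _),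
    fun heq => LinearMap.ext fun w => (hint w).symm.trans (heq w w.2)⟩

end WellPosedness

theorem eset_linear_step_wellposed_general (M N : ℕ) (hN : 1 ≤ N)
    (ε : ℝ) (hε : 0 ≤ ε) (a b : ℝ) (hab : a < b)
    (g : ℝ → ℝ → ℝ)
    (hg : IntegrableOn (fun p : ℝ × ℝ => g p.1 p.2) (Set.Icc (-1 : ℝ) 1 ×ˢ Set.Icc a b))
    (u₀ : Polynomial ℝ) (hu₀deg : u₀.natDegree ≤ M)
    (hu₀m : u₀.eval (-1 : ℝ) = 0) (hu₀p : u₀.eval (1 : ℝ) = 0) :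
    ∃! h : ℝ → ℝ → ℝ, MemV M N h ∧
      (∀ x ∈ Set.Icc (-1 : ℝ) 1, h x a = u₀.eval x) ∧
      ∀ w : ℝ → ℝ → ℝ, MemW M N w →
        (∫ t in a..b, ∫ x in (-1 : ℝ)..1,
          (ptd h x t * w x t + ε * pxd h x t * pxd w x t + g x t * w x t)) = 0 := by
  obtain ⟨N, rfl⟩ := Nat.exists_eq_add_of_le' hN
  let u : trialSpace M (N + 1) :=
    ⟨fun x _ => u₀.eval x, isPolyMN_polynomial_eval hu₀deg, fun _ => ⟨hu₀m, hu₀p⟩⟩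
  have hinit (k : trialSpace M (N + 1)) := initialTrace_eq_iff_eqOn (a := a)
    (Set.Icc_infinite (show (-1 : ℝ) < 1 by norm_num)) k u
  have hweak (k : trialSpace M (N + 1)) := heatForm_eq_neg_sourceForm_iff (ε := ε) hab.le hg k
  obtain ⟨h, ⟨h_init, h_weak⟩, h_unique⟩ := existsUnique_heatForm_eq hε hab u (-sourceForm hg)
  refine ⟨h, ⟨h.2, (hinit h).mp h_init, (hweak h).mp h_weak⟩, ?_⟩
  rintro k ⟨hk, hk_init, hk_weak⟩
  exact congrArg Subtype.val
    (h_unique ⟨k, hk⟩ ⟨(hinit ⟨k, hk⟩).mpr hk_init, (hweak ⟨k, hk⟩).mpr hk_weak⟩)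

/-- Well-posedness of the single-step linear space–time Galerkin problem
underlying the semi-implicit ESET scheme (the nonlinear term frozen into a
given continuous source `g`). -/
theorem eset_linear_step_wellposed (M N : ℕ) (hM : 1 ≤ M) (hN : 1 ≤ N)
    (ε : ℝ) (hε : 0 < ε) (a b : ℝ) (hab : a < b)
    (g : ℝ → ℝ → ℝ)
    (hg : ContinuousOn (fun p : ℝ × ℝ => g p.1 p.2)
      (Set.Icc (-1 : ℝ) 1 ×ˢ Set.Icc a b))
    (u₀ : Polynomial ℝ) (hu₀deg : u₀.natDegree ≤ M)
    (hu₀m : u₀.eval (-1 : ℝ) = 0) (hu₀p : u₀.eval (1 : ℝ) = 0) :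
    ∃! h : ℝ → ℝ → ℝ, MemV M N h ∧
      (∀ x ∈ Set.Icc (-1 : ℝ) 1, h x a = u₀.eval x) ∧
      ∀ w : ℝ → ℝ → ℝ, MemW M N w →
        (∫ t in a..b, ∫ x in (-1 : ℝ)..1,
          (ptd h x t * w x t + ε * pxd h x t * pxd w x t + g x t * w x t)) = 0 := by
  exact eset_linear_step_wellposed_general M N hN ε hε.le a b hab g
    (hg.integrableOn_compact (isCompact_Icc.prod isCompact_Icc)) u₀ hu₀deg hu₀m hu₀p
end

section
/- Fix integers M ≥ 1, N ≥ 1, reals ε > 0 and a < b, continuously differentiable functions f, F : ℝ → ℝ with F' = f, and suppose h ∈ V_{M,N} solves the implicit ESET scheme on [a,b]: ∫_a^b ∫₋₁¹ [∂_t h·w + ε ∂_x h·∂_x w + (1/ε) f(h)·w] dx dt = 0 for every w ∈ W_{M,N−1}. Then the discrete energy law holds: E[h(·,b)] − E[h(·,a)] = − ∫_a^b ∫₋₁¹ (∂_t h(x,t))² dx dt ≤ 0, where E[v] := ∫₋₁¹ ( (ε/2)(∂_x v(x))² + (1/ε) F(v(x)) ) dx. -/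
open MeasureTheory intervalIntegral

/-!
Differentiation in `t` lowers the degree in `t` by one and preserves the boundary condition, so
`w = ∂ₜh` is an admissible test function. Because the partial derivatives commute, the last two
terms of the scheme tested with `∂ₜh` form the time derivative of the energy density
`(ε/2)(∂ₓh)² + (1/ε)F(h)`; integrating it over space and time gives the increment of the energy,
while the first term is `(∂ₜh)²`.
-/

open Function

section PartialDerivatives

variable {x t : ℝ}

section VectorValued

variable {E : Type*} [NormedAddCommGroup E] [NormedSpace ℝ E] {u : ℝ → ℝ → E}

theorem hasDerivAt_left_fderiv_uncurry (hu : DifferentiableAt ℝ (uncurry u) (x, t)) :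
    HasDerivAt (fun y => u y t) (fderiv ℝ (uncurry u) (x, t) (1, 0)) x :=
  hu.hasFDerivAt.comp_hasDerivAt (l := uncurry u) (f := fun y => (y, t)) x
    ((hasDerivAt_id' x).prodMk (hasDerivAt_const x t))

theorem hasDerivAt_right_fderiv_uncurry (hu : DifferentiableAt ℝ (uncurry u) (x, t)) :
    HasDerivAt (u x) (fderiv ℝ (uncurry u) (x, t) (0, 1)) t :=
  hu.hasFDerivAt.comp_hasDerivAt (l := uncurry u) (f := fun s => (x, s)) t
    ((hasDerivAt_const t x).prodMk (hasDerivAt_id' t))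

end VectorValued

variable {u : ℝ → ℝ → ℝ}

theorem pxd_eq_fderiv_uncurry (hu : DifferentiableAt ℝ (uncurry u) (x, t)) :
    pxd u x t = fderiv ℝ (uncurry u) (x, t) (1, 0) :=
  (hasDerivAt_left_fderiv_uncurry hu).deriv

theorem ptd_eq_fderiv_uncurry (hu : DifferentiableAt ℝ (uncurry u) (x, t)) :
    ptd u x t = fderiv ℝ (uncurry u) (x, t) (0, 1) :=
  (hasDerivAt_right_fderiv_uncurry hu).deriv

theorem hasDerivAt_ptd (hu : DifferentiableAt ℝ (uncurry u) (x, t)) :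
    HasDerivAt (u x) (ptd u x t) t :=
  (hasDerivAt_right_fderiv_uncurry hu).differentiableAt.hasDerivAt

theorem uncurry_pxd (hu : Differentiable ℝ (uncurry u)) :
    uncurry (pxd u) = fun p => fderiv ℝ (uncurry u) p (1, 0) :=
  funext fun p => pxd_eq_fderiv_uncurry (hu p)

theorem uncurry_ptd (hu : Differentiable ℝ (uncurry u)) :
    uncurry (ptd u) = fun p => fderiv ℝ (uncurry u) p (0, 1) :=
  funext fun p => ptd_eq_fderiv_uncurry (hu p)

theorem contDiff_uncurry_pxd {n : WithTop ℕ∞} (hu : ContDiff ℝ (n + 1) (uncurry u)) :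
    ContDiff ℝ n (uncurry (pxd u)) := by
  rw [uncurry_pxd (hu.differentiable (by simp))]
  exact (hu.fderiv_right le_rfl).clm_apply contDiff_const

theorem contDiff_uncurry_ptd {n : WithTop ℕ∞} (hu : ContDiff ℝ (n + 1) (uncurry u)) :
    ContDiff ℝ n (uncurry (ptd u)) := by
  rw [uncurry_ptd (hu.differentiable (by simp))]
  exact (hu.fderiv_right le_rfl).clm_apply contDiff_const

theorem ptd_pxd_comm (hu : ContDiff ℝ 2 (uncurry u)) (x t : ℝ) :
    ptd (pxd u) x t = pxd (ptd u) x t := by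
  have hdiff : Differentiable ℝ (uncurry u) := hu.differentiable two_ne_zero
  have hpxd : Differentiable ℝ (uncurry (pxd u)) :=
    (contDiff_uncurry_pxd (n := 1) hu).differentiable one_ne_zero
  have hptd : Differentiable ℝ (uncurry (ptd u)) :=
    (contDiff_uncurry_ptd (n := 1) hu).differentiable one_ne_zero
  have hfderiv : DifferentiableAt ℝ (fderiv ℝ (uncurry u)) (x, t) :=
    (hu.fderiv_right (m := 1) le_rfl).differentiable one_ne_zero _
  have hsymm : IsSymmSndFDerivAt ℝ (uncurry u) (x, t) :=
    hu.contDiffAt.isSymmSndFDerivAt (by simp)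
  rw [ptd_eq_fderiv_uncurry (hpxd _), pxd_eq_fderiv_uncurry (hptd _), uncurry_pxd hdiff,
    uncurry_ptd hdiff, fderiv_clm_apply hfderiv (differentiableAt_const _),
    fderiv_clm_apply hfderiv (differentiableAt_const _)]
  simpa using hsymm.eq (0, 1) (1, 0)

end PartialDerivatives

section IteratedIntegrals

variable {E : Type*} [NormedAddCommGroup E] [NormedSpace ℝ E] {a b c d : ℝ}

theorem integral_integral_add_of_continuous {p q : ℝ → ℝ → E} (hp : Continuous (uncurry p))
    (hq : Continuous (uncurry q)) :
    ∫ t in a..b, ∫ x in c..d, (p x t + q x t) =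
      (∫ t in a..b, ∫ x in c..d, p x t) + ∫ t in a..b, ∫ x in c..d, q x t := by
  have hinner {k : ℝ → ℝ → E} (hk : Continuous (uncurry k)) (t : ℝ) :
      IntervalIntegrable (k · t) volume c d :=
    (hk.uncurry_right t).intervalIntegrable c d
  have houter {k : ℝ → ℝ → E} (hk : Continuous (uncurry k)) :
      IntervalIntegrable (fun t => ∫ x in c..d, k x t) volume a b :=
    (continuous_parametric_intervalIntegral_of_continuous' (f := flip k)
      (hk.comp continuous_swap) c d).intervalIntegrable a b
  rw [← integral_add (houter hp) (houter hq)]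
  exact integral_congr fun t _ => integral_add (hinner hp t) (hinner hq t)

theorem integral_sub_integral_eq_integral_integral_deriv [CompleteSpace E] {e g : ℝ → ℝ → E}
    (ha : IntervalIntegrable (e · a) volume c d) (hb : IntervalIntegrable (e · b) volume c d)
    (hg : ContinuousOn (uncurry g) (Set.uIcc c d ×ˢ Set.uIcc a b))
    (hderiv : ∀ x ∈ Set.uIcc c d, ∀ t ∈ Set.uIcc a b, HasDerivAt (e x) (g x t) t) :
    (∫ x in c..d, e x b) - (∫ x in c..d, e x a) = ∫ t in a..b, ∫ x in c..d, g x t := by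
  have hint : IntegrableOn (uncurry (flip g)) (Set.uIoc a b ×ˢ Set.uIoc c d) :=
    ((hg.comp continuous_swap.continuousOn fun _ hp => hp.symm).integrableOn_compact
      (isCompact_uIcc.prod isCompact_uIcc)).mono_set
      (Set.prod_mono Set.uIoc_subset_uIcc Set.uIoc_subset_uIcc)
  calc (∫ x in c..d, e x b) - (∫ x in c..d, e x a)
      = ∫ x in c..d, (e x b - e x a) := (integral_sub hb ha).symm
    _ = ∫ x in c..d, ∫ t in a..b, g x t := integral_congr fun x hx =>
        (integral_eq_sub_of_hasDerivAt (hderiv x hx)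
          ((hg.uncurry_left x hx).intervalIntegrable)).symm
    _ = ∫ t in a..b, ∫ x in c..d, g x t := (intervalIntegral_intervalIntegral_swap hint).symm

end IteratedIntegrals

/-- The Ginzburg–Landau energy density of the profile `v` with potential `F`, the integrand of
`freeEnergy`. The weights `α` of the gradient term and `β` of the potential are independent of each
other; the paper has `α = ε` and `β = 1 / ε`. -/
noncomputable def energyDensity (α β : ℝ) (F v : ℝ → ℝ) (x : ℝ) : ℝ :=
  α / 2 * deriv v x ^ 2 + β * F (v x)

/-- The Ginzburg–Landau free energy on `[c, d]`, the paper's `E[v]`. -/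
noncomputable def freeEnergy (α β : ℝ) (F : ℝ → ℝ) (c d : ℝ) (v : ℝ → ℝ) : ℝ :=
  ∫ x in c..d, energyDensity α β F v x

/-- The rate of change of the energy density along `u`, with `f` the derivative of the potential.
The mixed derivative is taken in the order in which the scheme tested with `∂ₜu` contains it. -/
noncomputable def energyRate (α β : ℝ) (f : ℝ → ℝ) (u : ℝ → ℝ → ℝ) (x t : ℝ) : ℝ :=
  α * pxd u x t * pxd (ptd u) x t + β * f (u x t) * ptd u x t

section EnergyLaw

variable {α β a b c d : ℝ} {f F : ℝ → ℝ} {u : ℝ → ℝ → ℝ}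

theorem hasDerivAt_energyDensity (hF : ∀ y, HasDerivAt F (f y) y) (hu : ContDiff ℝ 2 (uncurry u))
    (x t : ℝ) :
    HasDerivAt (fun s => energyDensity α β F (u · s) x) (energyRate α β f u x t) t := by
  have hdt : HasDerivAt (u x) (ptd u x t) t := hasDerivAt_ptd (hu.differentiable two_ne_zero _)
  have hdxdt : HasDerivAt (pxd u x) (pxd (ptd u) x t) t :=
    ptd_pxd_comm hu x t ▸
      hasDerivAt_ptd ((contDiff_uncurry_pxd (n := 1) hu).differentiable one_ne_zero _)
  refine (((hdxdt.fun_pow 2).const_mul (α / 2)).fun_add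
    (((hF (u x t)).comp t hdt).const_mul β)).congr_deriv ?_
  simp only [energyRate]
  push_cast
  ring

theorem continuous_uncurry_energyRate (hf : Continuous f) (hu : ContDiff ℝ 2 (uncurry u)) :
    Continuous (uncurry (energyRate α β f u)) := by
  have hptd : ContDiff ℝ 1 (uncurry (ptd u)) := contDiff_uncurry_ptd hu
  have hpxd : Continuous (uncurry (pxd u)) := (contDiff_uncurry_pxd (n := 1) hu).continuous
  have hmixed : Continuous (uncurry (pxd (ptd u))) :=
    (contDiff_uncurry_pxd (n := 0) hptd).continuous
  exact ((hpxd.const_mul α).mul hmixed).add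
    (((hf.comp hu.continuous).const_mul β).mul hptd.continuous)

theorem continuous_energyDensity {v : ℝ → ℝ} (hF : Continuous F) (hv : ContDiff ℝ 1 v) :
    Continuous (energyDensity α β F v) :=
  (((hv.continuous_deriv le_rfl).pow 2).const_mul (α / 2)).add
    ((hF.comp hv.continuous).const_mul β)

theorem freeEnergy_sub_freeEnergy (hf : Continuous f) (hF : ∀ y, HasDerivAt F (f y) y)
    (hu : ContDiff ℝ 2 (uncurry u)) :
    freeEnergy α β F c d (u · b) - freeEnergy α β F c d (u · a) =
      ∫ t in a..b, ∫ x in c..d, energyRate α β f u x t := by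
  have hFcont : Continuous F := continuous_iff_continuousAt.2 fun y => (hF y).continuousAt
  have hslice (t : ℝ) : ContDiff ℝ 1 (u · t) :=
    (hu.of_le one_le_two).comp (contDiff_id.prodMk contDiff_const)
  have hint (t : ℝ) : IntervalIntegrable (energyDensity α β F (u · t)) volume c d :=
    (continuous_energyDensity hFcont (hslice t)).intervalIntegrable c d
  exact integral_sub_integral_eq_integral_integral_deriv (hint a) (hint b)
    (continuous_uncurry_energyRate hf hu).continuousOn
    fun x _ t _ => hasDerivAt_energyDensity hF hu x t

theorem eset_implicit_energy_law_general (hab : a ≤ b) (hcd : c ≤ d) (hf : Continuous f)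
    (hF : ∀ y, HasDerivAt F (f y) y) (hu : ContDiff ℝ 2 (uncurry u))
    (hscheme : ∫ t in a..b, ∫ x in c..d,
      (ptd u x t * ptd u x t + α * pxd u x t * pxd (ptd u) x t + β * f (u x t) * ptd u x t) = 0) :
    freeEnergy α β F c d (u · b) - freeEnergy α β F c d (u · a) =
        -∫ t in a..b, ∫ x in c..d, ptd u x t ^ 2 ∧
      freeEnergy α β F c d (u · b) - freeEnergy α β F c d (u · a) ≤ 0 := by
  have hptd : Continuous (uncurry fun x t => ptd u x t ^ 2) :=
    (contDiff_uncurry_ptd (n := 1) hu).continuous.pow 2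
  have hbalance : (∫ t in a..b, ∫ x in c..d, ptd u x t ^ 2) +
      ∫ t in a..b, ∫ x in c..d, energyRate α β f u x t = 0 := by
    rw [← integral_integral_add_of_continuous hptd (continuous_uncurry_energyRate hf hu)]
    simpa only [energyRate, sq, add_assoc] using hscheme
  have hlaw : freeEnergy α β F c d (u · b) - freeEnergy α β F c d (u · a) =
      -∫ t in a..b, ∫ x in c..d, ptd u x t ^ 2 :=
    (freeEnergy_sub_freeEnergy hf hF hu).trans (eq_neg_of_add_eq_zero_right hbalance)
  have hdissipation : 0 ≤ ∫ t in a..b, ∫ x in c..d, ptd u x t ^ 2 :=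
    integral_nonneg hab fun t _ => integral_nonneg hcd fun x _ => sq_nonneg _
  exact ⟨hlaw, hlaw ▸ neg_nonpos.2 hdissipation⟩

end EnergyLaw

section PolynomialSpaces

variable {M N : ℕ} {h : ℝ → ℝ → ℝ}

theorem IsPolyMN.contDiff_uncurry {n : WithTop ℕ∞} (hh : IsPolyMN M N h) :
    ContDiff ℝ n (uncurry h) := by
  obtain ⟨c, hc⟩ := hh
  simp only [uncurry_def, hc]
  fun_prop

theorem ptd_eq_sum_of_eq_sum {c : Fin (M + 1) → Fin (N + 1) → ℝ}
    (hc : ∀ x t : ℝ, h x t = ∑ i : Fin (M + 1), ∑ j : Fin (N + 1),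
      c i j * x ^ (i : ℕ) * t ^ (j : ℕ)) (x t : ℝ) :
    ptd h x t = ∑ i : Fin (M + 1), ∑ j : Fin (N + 1),
      c i j * x ^ (i : ℕ) * ((j : ℕ) * t ^ ((j : ℕ) - 1)) := by
  simp only [ptd, hc]
  exact (HasDerivAt.fun_sum fun i _ => HasDerivAt.fun_sum fun j _ =>
    (hasDerivAt_pow _ t).const_mul _).deriv

theorem IsPolyMN.ptd_pred (hh : IsPolyMN M N h) : IsPolyMN M (N - 1) (ptd h) := by
  obtain ⟨c, hc⟩ := hh
  cases N with
  | zero => exact ⟨0, fun x t => by simp [ptd_eq_sum_of_eq_sum hc]⟩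
  | succ n =>
    refine ⟨fun i (j : Fin (n + 1)) => c i j.succ * ((j : ℕ) + 1), fun x t => ?_⟩
    rw [ptd_eq_sum_of_eq_sum hc]
    refine Finset.sum_congr rfl fun i _ => ?_
    rw [Fin.sum_univ_succ]
    simp only [Fin.val_zero, Nat.cast_zero, zero_mul, mul_zero, zero_add, Fin.val_succ,
      Nat.cast_add, Nat.cast_one, Nat.add_sub_cancel]
    exact Finset.sum_congr rfl fun j _ => by ring

theorem MemV.memW_ptd (hh : MemV M N h) : MemW M N (ptd h) :=
  ⟨hh.1.ptd_pred, fun t => by simp [ptd, hh.2]⟩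

end PolynomialSpaces

/-- The discrete energy dissipation law of Theorem 2.1: a solution of the
implicit ESET scheme on `[a,b]` satisfies
`E[h(·,b)] − E[h(·,a)] = −∫_a^b ∫₋₁¹ (∂_t h)² dx dt ≤ 0`,
where `E[v] = ∫₋₁¹ ((ε/2)(∂ₓv)² + (1/ε) F(v)) dx`. -/
theorem eset_implicit_energy_law (M N : ℕ) (hM : 1 ≤ M) (hN : 1 ≤ N)
    (ε : ℝ) (hε : 0 < ε) (a b : ℝ) (hab : a < b)
    (f F : ℝ → ℝ) (hf : ContDiff ℝ 1 f) (hF : ∀ y : ℝ, HasDerivAt F (f y) y)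
    (h : ℝ → ℝ → ℝ) (hmem : MemV M N h)
    (hscheme : ∀ w : ℝ → ℝ → ℝ, MemW M N w →
      (∫ t in a..b, ∫ x in (-1 : ℝ)..1,
        (ptd h x t * w x t + ε * pxd h x t * pxd w x t +
          (1 / ε) * f (h x t) * w x t)) = 0) :
    (∫ x in (-1 : ℝ)..1, (ε / 2 * (pxd h x b) ^ 2 + (1 / ε) * F (h x b))) -
      (∫ x in (-1 : ℝ)..1, (ε / 2 * (pxd h x a) ^ 2 + (1 / ε) * F (h x a)))
      = - ∫ t in a..b, ∫ x in (-1 : ℝ)..1, (ptd h x t) ^ 2 ∧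
    (∫ x in (-1 : ℝ)..1, (ε / 2 * (pxd h x b) ^ 2 + (1 / ε) * F (h x b))) -
      (∫ x in (-1 : ℝ)..1, (ε / 2 * (pxd h x a) ^ 2 + (1 / ε) * F (h x a))) ≤ 0 :=
  eset_implicit_energy_law_general hab.le (by norm_num) hf.continuous hF
    hmem.1.contDiff_uncurry (hscheme _ hmem.memW_ptd)
end

section
/- Fix integers M ≥ 0, N ≥ 1, reals ε > 0 and a < b, and a continuous function g : [−1,1] × [a,b] → ℝ. Let h(x,t) be a real polynomial function of degree at most M in x and at most N in t, and suppose that for every real polynomial function w(x,t) of degree at most M in x and at most N−1 in t (with no boundary conditions imposed) one has ∫_a^b ∫₋₁¹ [∂_t h·w + ε ∂_x h·∂_x w + (g(x,t) − ḡ(t))·w] dx dt = 0, where ḡ(t) := (1/2)∫₋₁¹ g(x,t) dx is the spatial average of g. Then the total mass is conserved: ∫₋₁¹ h(x,b) dx = ∫₋₁¹ h(x,a) dx. -/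
open MeasureTheory intervalIntegral

/-! Testing with `w = 1` kills the diffusion term, and the source has zero spatial average, so only
the space–time integral of `∂ₜ h` is left; by Fubini it is the change of mass. -/

lemma IsPolyMN.contDiff {M N : ℕ} {h : ℝ → ℝ → ℝ} (hpoly : IsPolyMN M N h) {n : WithTop ℕ∞} :
    ContDiff ℝ n h.uncurry := by
  obtain ⟨c, hc⟩ := hpoly
  simp only [Function.uncurry_def, hc]
  fun_prop

lemma isPolyMN_const (M N : ℕ) (r : ℝ) : IsPolyMN M N (fun _ _ => r) := by
  refine ⟨fun i j => if i = 0 ∧ j = 0 then r else 0, fun x t => ?_⟩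
  rw [Finset.sum_eq_single 0, Finset.sum_eq_single 0] <;> simp +contextual

lemma pxd_const (r x t : ℝ) : pxd (fun _ _ => r) x t = 0 :=
  deriv_const x r

lemma hasDerivAt_fderiv_uncurry {h : ℝ → ℝ → ℝ} {x t : ℝ}
    (hh : DifferentiableAt ℝ h.uncurry (x, t)) :
    HasDerivAt (h x) (fderiv ℝ h.uncurry (x, t) (0, 1)) t :=
  hh.hasFDerivAt.comp_hasDerivAt t ((hasDerivAt_const t x).prodMk (hasDerivAt_id t))

lemma hasDerivAt_ptd_s17 {h : ℝ → ℝ → ℝ} {x t : ℝ} (hh : DifferentiableAt ℝ h.uncurry (x, t)) :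
    HasDerivAt (h x) (ptd h x t) t :=
  (hasDerivAt_fderiv_uncurry hh).differentiableAt.hasDerivAt

lemma continuous_ptd {h : ℝ → ℝ → ℝ} (hh : ContDiff ℝ 1 h.uncurry) :
    Continuous (ptd h).uncurry := by
  have hptd : (ptd h).uncurry = fun p => fderiv ℝ h.uncurry p (0, 1) :=
    funext fun p => (hasDerivAt_fderiv_uncurry (hh.differentiable one_ne_zero p)).deriv
  rw [hptd]
  exact (hh.continuous_fderiv one_ne_zero).clm_apply continuous_const

lemma integral_integral_ptd {h : ℝ → ℝ → ℝ} (hh : ContDiff ℝ 1 h.uncurry) (a b c d : ℝ) :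
    ∫ t in a..b, ∫ x in c..d, ptd h x t = (∫ x in c..d, h x b) - ∫ x in c..d, h x a := by
  have hptd := continuous_ptd hh
  have hptd_int : IntegrableOn (fun t x => ptd h x t).uncurry (Set.uIoc a b ×ˢ Set.uIoc c d) :=
    ((hptd.comp continuous_swap).continuousOn.integrableOn_compact
      (isCompact_uIcc.prod isCompact_uIcc)).mono_set
        (Set.prod_mono Set.uIoc_subset_uIcc Set.uIoc_subset_uIcc)
  have hslice (t : ℝ) : IntervalIntegrable (fun x => h x t) volume c d :=
    (hh.continuous.uncurry_right t).intervalIntegrable c d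
  calc ∫ t in a..b, ∫ x in c..d, ptd h x t
      = ∫ x in c..d, ∫ t in a..b, ptd h x t := intervalIntegral_intervalIntegral_swap hptd_int
    _ = ∫ x in c..d, (h x b - h x a) := integral_congr fun x _ =>
        integral_eq_sub_of_hasDerivAt
          (fun t _ => hasDerivAt_ptd_s17 (hh.differentiable one_ne_zero (x, t)))
          ((hptd.uncurry_left x).intervalIntegrable a b)
    _ = (∫ x in c..d, h x b) - ∫ x in c..d, h x a := integral_sub (hslice b) (hslice a)

lemma intervalAverage_neg_one_one (f : ℝ → ℝ) :
    ⨍ x in (-1 : ℝ)..1, f x = (1 / 2) * ∫ x in (-1 : ℝ)..1, f x := by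
  rw [interval_average_eq, smul_eq_mul]
  norm_num

section IntervalAverage

variable {E : Type*} [NormedAddCommGroup E] [NormedSpace ℝ E] [CompleteSpace E]

lemma intervalIntegral_sub_intervalAverage (f : ℝ → E) (c d : ℝ) :
    ∫ x in c..d, (f x - ⨍ y in c..d, f y) = 0 := by
  rw [intervalIntegral_eq_integral_uIoc, setAverage_sub_setAverage (by simp),
    smul_zero]

lemma intervalIntegral_add_sub_intervalAverage {f g : ℝ → E} {c d : ℝ}
    (hf : IntervalIntegrable f volume c d) (hg : IntervalIntegrable g volume c d) :
    ∫ x in c..d, (f x + (g x - ⨍ y in c..d, g y)) = ∫ x in c..d, f x := by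
  rw [integral_add hf (hg.sub intervalIntegrable_const), intervalIntegral_sub_intervalAverage,
    add_zero]

end IntervalAverage

theorem eset_conservative_mass_conservation_general {h g : ℝ → ℝ → ℝ} {a b c d ε : ℝ}
    {W : Set (ℝ → ℝ → ℝ)} (hh : ContDiff ℝ 1 h.uncurry)
    (hg : ∀ᵐ t, t ∈ Set.uIoc a b → IntervalIntegrable (fun x => g x t) volume c d)
    (hW : (fun _ _ => 1) ∈ W)
    (hweak : ∀ w ∈ W, (∫ t in a..b, ∫ x in c..d,
      (ptd h x t * w x t + ε * pxd h x t * pxd w x t +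
        (g x t - ⨍ y in c..d, g y t) * w x t)) = 0) :
    (∫ x in c..d, h x b) = ∫ x in c..d, h x a := by
  have htest := hweak _ hW
  simp only [pxd_const, mul_zero, add_zero, mul_one] at htest
  have hsource : ∀ᵐ t, t ∈ Set.uIoc a b →
      ∫ x in c..d, (ptd h x t + (g x t - ⨍ y in c..d, g y t)) = ∫ x in c..d, ptd h x t := by
    filter_upwards [hg] with t hgt ht
    exact intervalIntegral_add_sub_intervalAverage
      (((continuous_ptd hh).uncurry_right t).intervalIntegrable c d) (hgt ht)
  rw [integral_congr_ae hsource, integral_integral_ptd hh] at htest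
  exact sub_eq_zero.mp htest

/-- Discrete mass conservation of the ESET scheme for the conservative
Allen–Cahn equation on `Ω = (−1,1)` (so `|Ω| = 2`): if the space–time Galerkin
relation holds with source `g − ḡ(t)` where `ḡ(t) = (1/2)∫₋₁¹ g(x,t) dx`, for
all polynomial test functions (no boundary conditions imposed), then the total
mass `∫₋₁¹ h(x,t) dx` is the same at `t = b` as at `t = a`. -/
theorem eset_conservative_mass_conservation (M N : ℕ) (hN : 1 ≤ N)
    (ε : ℝ) (hε : 0 < ε) (a b : ℝ) (hab : a < b)
    (g : ℝ → ℝ → ℝ)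
    (hg : ContinuousOn (fun p : ℝ × ℝ => g p.1 p.2)
      (Set.Icc (-1 : ℝ) 1 ×ˢ Set.Icc a b))
    (h : ℝ → ℝ → ℝ) (hpoly : IsPolyMN M N h)
    (hweak : ∀ w : ℝ → ℝ → ℝ, IsPolyMN M (N - 1) w →
      (∫ t in a..b, ∫ x in (-1 : ℝ)..1,
        (ptd h x t * w x t + ε * pxd h x t * pxd w x t +
          (g x t - (1 / 2) * ∫ y in (-1 : ℝ)..1, g y t) * w x t)) = 0) :
    (∫ x in (-1 : ℝ)..1, h x b) = ∫ x in (-1 : ℝ)..1, h x a := by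
  have hslice (t : ℝ) (ht : t ∈ Set.uIoc a b) :
      IntervalIntegrable (fun x => g x t) volume (-1) 1 :=
    (hg.uncurry_right t (Set.Ioc_subset_Icc_self (Set.uIoc_of_le hab.le ▸ ht)))
      |>.intervalIntegrable_of_Icc (by norm_num)
  simp only [← intervalAverage_neg_one_one] at hweak
  exact eset_conservative_mass_conservation_general hpoly.contDiff (.of_forall hslice)
    (isPolyMN_const M (N - 1) 1) hweak
end
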